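/- Let k be a field of characteristic 2 and R = k[x,y]/(x², y²). Set M₀ = R/(x), M₁ = R/(y), M∞ = R/(x+y), and regard k = R/(x,y) as an R-module; let ε : R → k and ε₀ : M₀ → k, ε₁ : M₁ → k, ε∞ : M∞ → k be the induced augmentation maps. Define R-linear maps h : M₀ × M₁ × M∞ → R, h(m₀,m₁,m∞) = x·m₀ + y·m₁ + (x+y)·m∞ (where multiplication by x, y, x+y gives well-defined maps M₀ → R, M₁ → R, M∞ → R respectively); g : R × k × k → M₀ × M₁ × M∞, g(a,b,c) = (ā + c·ȳ, ā + b·x̄, ā + b·x̄ + c·ȳ), bars denoting residue classes; and f : M₀ × M₁ × M∞ → R × k × k, f(m₀,m₁,m∞) = (x·m₀ + y·m₁ + (x+y)·m∞, ε₀(m₀) + ε∞(m∞), ε₁(m₁) + ε∞(m∞)). Then the ℤ-indexed sequence ⋯ →g M₀×M₁×M∞ →f R×k×k →g M₀×M₁×M∞ →h R →ε k → 0 (with k in degree 0, R in degree −1, M₀×M₁×M∞ in each even degree ≤ −2, R×k×k in each odd degree ≤ −3, differential h out of degree −2, g out of each odd degree ≤ −3, f out of each even degree ≤ −4) is a complex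 and is exact in every degree. Equivalently: ε is surjective; ε∘h = 0 and the kernel of ε equals the range of h; h∘g = 0 and the kernel of h equals the range of g; g∘f = 0 and the kernel of g equals the range of f; f∘g = 0 and the kernel of f equals the range of g. -/

import Mathlib

open MvPolynomial

noncomputable section

/-- The ideal `(x², y²)` of `k[x,y]`. -/
def IKF (k : Type*) [Field k] : Ideal (MvPolynomial (Fin 2) k) :=
  Ideal.span {(X 0 : MvPolynomial (Fin 2) k) ^ 2, (X 1 : MvPolynomial (Fin 2) k) ^ 2}

/-- `R = k[x,y]/(x², y²)` (isomorphic to the group algebra of the Klein four-group). -/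
abbrev KFR (k : Type*) [Field k] : Type _ := MvPolynomial (Fin 2) k ⧸ IKF k

/-- The class `x` in `R`. -/
def xR (k : Type*) [Field k] : KFR k := Ideal.Quotient.mk (IKF k) (X 0)

/-- The class `y` in `R`. -/
def yR (k : Type*) [Field k] : KFR k := Ideal.Quotient.mk (IKF k) (X 1)

/-- `M₀ = R/(x)`. -/
abbrev M0 (k : Type*) [Field k] : Type _ := KFR k ⧸ Ideal.span {xR k}

/-- `M₁ = R/(y)`. -/
abbrev M1 (k : Type*) [Field k] : Type _ := KFR k ⧸ Ideal.span {yR k}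

/-- `M∞ = R/(x+y)`. -/
abbrev Minf (k : Type*) [Field k] : Type _ := KFR k ⧸ Ideal.span {xR k + yR k}

/-- The quotient map `R → M₀`. -/
def mk0 (k : Type*) [Field k] : KFR k →+* M0 k := Ideal.Quotient.mk _

/-- The quotient map `R → M₁`. -/
def mk1 (k : Type*) [Field k] : KFR k →+* M1 k := Ideal.Quotient.mk _

/-- The quotient map `R → M∞`. -/
def mkinf (k : Type*) [Field k] : KFR k →+* Minf k := Ideal.Quotient.mk _

/-- The element `a + b x + c y + d xy` of `R`. -/
def EKF (k : Type*) [Field k] (a b c d : k) : KFR k :=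
  algebraMap k (KFR k) a + algebraMap k (KFR k) b * xR k + algebraMap k (KFR k) c * yR k
    + algebraMap k (KFR k) d * (xR k * yR k)

lemma xR_sq (k : Type*) [Field k] : xR k * xR k = 0 := by
  unfold xR
  rw [← map_mul, Ideal.Quotient.eq_zero_iff_mem, ← pow_two]
  exact Ideal.subset_span (by simp)

lemma yR_sq (k : Type*) [Field k] : yR k * yR k = 0 := by
  unfold yR
  rw [← map_mul, Ideal.Quotient.eq_zero_iff_mem, ← pow_two]
  exact Ideal.subset_span (by simp)

lemma EKF_mk (k : Type*) [Field k] (a b c d : k) :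
    EKF k a b c d = Ideal.Quotient.mk (IKF k) (C a + C b * X 0 + C c * X 1 + C d * (X 0 * X 1)) := by
  simp only [map_add, map_mul]
  rfl

lemma EKF_add (k : Type*) [Field k] (a b c d a' b' c' d' : k) :
    EKF k a b c d + EKF k a' b' c' d' = EKF k (a + a') (b + b') (c + c') (d + d') := by
  simp only [EKF, map_add]; ring

lemma x_EKF (k : Type*) [Field k] (a b c d : k) :
    xR k * EKF k a b c d = EKF k 0 a 0 c := by
  simp only [EKF, map_zero]
  linear_combination (algebraMap k (KFR k) b + algebraMap k (KFR k) d * yR k) * xR_sq k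

lemma y_EKF (k : Type*) [Field k] (a b c d : k) :
    yR k * EKF k a b c d = EKF k 0 0 a b := by
  simp only [EKF, map_zero]
  linear_combination (algebraMap k (KFR k) c + algebraMap k (KFR k) d * xR k) * yR_sq k

lemma xy_EKF (k : Type*) [Field k] (a b c d : k) :
    (xR k + yR k) * EKF k a b c d = EKF k 0 a a (b + c) := by
  rw [add_mul, x_EKF, y_EKF, EKF_add]; congr 1 <;> ring

lemma EKF_surj (k : Type*) [Field k] (r : KFR k) : ∃ a b c d, r = EKF k a b c d := by
  obtain ⟨P, rfl⟩ := Ideal.Quotient.mk_surjective r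
  induction P using MvPolynomial.induction_on with
  | C a => exact ⟨a, 0, 0, 0, by rw [EKF_mk]; simp⟩
  | add p q hp hq =>
    obtain ⟨a, b, c, d, h1⟩ := hp
    obtain ⟨a', b', c', d', h2⟩ := hq
    exact ⟨_, _, _, _, by rw [map_add, h1, h2, EKF_add]⟩
  | mul_X p i hp =>
    obtain ⟨a, b, c, d, h1⟩ := hp
    rw [map_mul, h1, mul_comm]
    fin_cases i
    · exact ⟨_, _, _, _, x_EKF k a b c d⟩
    · exact ⟨_, _, _, _, y_EKF k a b c d⟩

/-- Coordinates, through the iterated dual numbers. -/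
def coordKF (k : Type*) [Field k] : KFR k →+* DualNumber (DualNumber k) :=
  Ideal.Quotient.lift (IKF k)
    (MvPolynomial.aeval (R := k)
      ![(TrivSqZeroExt.inl DualNumber.eps : DualNumber (DualNumber k)),
        DualNumber.eps]).toRingHom (by
    intro a ha
    have : IKF k ≤ RingHom.ker (MvPolynomial.aeval (R := k)
      ![(TrivSqZeroExt.inl DualNumber.eps : DualNumber (DualNumber k)),
        DualNumber.eps]).toRingHom := by
      unfold IKF
      rw [Ideal.span_le]
      rintro p (rfl | rfl)
      · simp [RingHom.mem_ker, pow_two, ← TrivSqZeroExt.inl_mul]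
      · simp [RingHom.mem_ker, pow_two]
    exact RingHom.mem_ker.1 (this ha))

lemma EKF_inj (k : Type*) [Field k] (a b c d a' b' c' d' : k) :
    EKF k a b c d = EKF k a' b' c' d' ↔ a = a' ∧ b = b' ∧ c = c' ∧ d = d' := by
  constructor
  · intro h
    have key : ∀ a b c d : k, coordKF k (EKF k a b c d) =
        ((a, b), (c, d)) := by
      intro a b c d
      rw [EKF_mk]
      unfold coordKF
      rw [Ideal.Quotient.lift_mk]
      ext <;> simp [TrivSqZeroExt.algebraMap_eq_inl'] <;> rfl
    have := congrArg (coordKF k) h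
    rw [key, key] at this
    have e1 := congrArg (fun z => z.fst.fst) this
    have e2 := congrArg (fun z => z.fst.snd) this
    have e3 := congrArg (fun z => z.snd.fst) this
    have e4 := congrArg (fun z => z.snd.snd) this
    exact ⟨e1, e2, e3, e4⟩
  · rintro ⟨rfl, rfl, rfl, rfl⟩; rfl

lemma mk0_EKF (k : Type*) [Field k] (a b c d a' b' c' d' : k) :
    mk0 k (EKF k a b c d) = mk0 k (EKF k a' b' c' d') ↔ a = a' ∧ c = c' := by
  unfold mk0
  rw [Ideal.Quotient.eq, Ideal.mem_span_singleton]
  constructor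
  · rintro ⟨s, hs⟩
    obtain ⟨p, q, r, t, rfl⟩ := EKF_surj k s
    rw [x_EKF, sub_eq_iff_eq_add, EKF_add, EKF_inj] at hs
    simpa using And.intro hs.1 hs.2.2.1
  · rintro ⟨rfl, rfl⟩
    refine ⟨EKF k (b - b') 0 (d - d') 0, ?_⟩
    rw [x_EKF, sub_eq_iff_eq_add, EKF_add, EKF_inj]
    simp

lemma mk1_EKF (k : Type*) [Field k] (a b c d a' b' c' d' : k) :
    mk1 k (EKF k a b c d) = mk1 k (EKF k a' b' c' d') ↔ a = a' ∧ b = b' := by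
  unfold mk1
  rw [Ideal.Quotient.eq, Ideal.mem_span_singleton]
  constructor
  · rintro ⟨s, hs⟩
    obtain ⟨p, q, r, t, rfl⟩ := EKF_surj k s
    rw [y_EKF, sub_eq_iff_eq_add, EKF_add, EKF_inj] at hs
    simpa using And.intro hs.1 hs.2.1
  · rintro ⟨rfl, rfl⟩
    refine ⟨EKF k (c - c') (d - d') 0 0, ?_⟩
    rw [y_EKF, sub_eq_iff_eq_add, EKF_add, EKF_inj]
    simp

lemma mkinf_EKF (k : Type*) [Field k] [CharP k 2] (a b c d a' b' c' d' : k) :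
    mkinf k (EKF k a b c d) = mkinf k (EKF k a' b' c' d') ↔ a = a' ∧ b + c = b' + c' := by
  have h2 : (2 : k) = 0 := CharTwo.two_eq_zero
  unfold mkinf
  rw [Ideal.Quotient.eq, Ideal.mem_span_singleton]
  constructor
  · rintro ⟨s, hs⟩
    obtain ⟨p, q, r, t, rfl⟩ := EKF_surj k s
    rw [xy_EKF, sub_eq_iff_eq_add, EKF_add, EKF_inj] at hs
    obtain ⟨h1, h3, h4, h5⟩ := hs
    exact ⟨by linear_combination h1, by linear_combination h3 + h4 + p * h2⟩
  · rintro ⟨rfl, h⟩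
    refine ⟨EKF k (b - b') (d - d') 0 0, ?_⟩
    rw [xy_EKF, sub_eq_iff_eq_add, EKF_add, EKF_inj]
    refine ⟨by ring, by ring, by linear_combination h - (b - b') * h2, by ring⟩

/-- For `k` a field of characteristic `2`, `R = k[x,y]/(x²,y²)`, `M₀ = R/(x)`,
`M₁ = R/(y)`, `M∞ = R/(x+y)`, with the augmentations `ε, ε₀, ε₁, ε∞` and the maps
`h(m₀,m₁,m∞) = x·m₀ + y·m₁ + (x+y)·m∞`,
`g(a,b,c) = (ā + c·ȳ, ā + b·x̄, ā + b·x̄ + c·ȳ)`,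
`f(m₀,m₁,m∞) = (x·m₀ + y·m₁ + (x+y)·m∞, ε₀(m₀)+ε∞(m∞), ε₁(m₁)+ε∞(m∞))`,
the sequence `⋯ →g M₀×M₁×M∞ →f R×k×k →g M₀×M₁×M∞ →h R →ε k → 0` is a complex and
is exact in every degree: `ε` is surjective; `ε∘h = 0` and `ker ε = range h`;
`h∘g = 0` and `ker h = range g`; `g∘f = 0` and `ker g = range f`; `f∘g = 0` and
`ker f = range g`. -/
theorem stmt11 (k : Type*) [Field k] [CharP k 2]
    -- ε : R → k is the augmentation (evaluation at x = y = 0):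
    (ε : KFR k → k)
    (hε : ∀ P : MvPolynomial (Fin 2) k,
      ε (Ideal.Quotient.mk (IKF k) P) = MvPolynomial.aeval (fun _ : Fin 2 => (0 : k)) P)
    -- the induced augmentations on M₀, M₁, M∞:
    (ε0 : M0 k → k) (hε0 : ∀ a : KFR k, ε0 (mk0 k a) = ε a)
    (ε1 : M1 k → k) (hε1 : ∀ a : KFR k, ε1 (mk1 k a) = ε a)
    (εinf : Minf k → k) (hεinf : ∀ a : KFR k, εinf (mkinf k a) = ε a)
    -- multiplication by x, y, x+y as well-defined maps M₀ → R, M₁ → R, M∞ → R: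
    (μ0 : M0 k → KFR k) (hμ0 : ∀ a : KFR k, μ0 (mk0 k a) = xR k * a)
    (μ1 : M1 k → KFR k) (hμ1 : ∀ a : KFR k, μ1 (mk1 k a) = yR k * a)
    (μinf : Minf k → KFR k) (hμinf : ∀ a : KFR k, μinf (mkinf k a) = (xR k + yR k) * a)
    -- the maps h, g, f:
    (h : M0 k × M1 k × Minf k → KFR k)
    (hh : ∀ m : M0 k × M1 k × Minf k, h m = μ0 m.1 + μ1 m.2.1 + μinf m.2.2)
    (g : KFR k × k × k → M0 k × M1 k × Minf k)
    (hg : ∀ v : KFR k × k × k,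
      g v = (mk0 k v.1 + (algebraMap k (M0 k) : k →+* M0 k) v.2.2 * mk0 k (yR k),
             mk1 k v.1 + (algebraMap k (M1 k) : k →+* M1 k) v.2.1 * mk1 k (xR k),
             mkinf k v.1 + (algebraMap k (Minf k) : k →+* Minf k) v.2.1 * mkinf k (xR k)
               + (algebraMap k (Minf k) : k →+* Minf k) v.2.2 * mkinf k (yR k)))
    (f : M0 k × M1 k × Minf k → KFR k × k × k)
    (hf : ∀ m : M0 k × M1 k × Minf k,
      f m = (μ0 m.1 + μ1 m.2.1 + μinf m.2.2,
             ε0 m.1 + εinf m.2.2,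
             ε1 m.2.1 + εinf m.2.2)) :
    Function.Surjective ε ∧
    (∀ m : M0 k × M1 k × Minf k, ε (h m) = 0) ∧
    {r : KFR k | ε r = 0} = Set.range h ∧
    (∀ v : KFR k × k × k, h (g v) = 0) ∧
    {m : M0 k × M1 k × Minf k | h m = 0} = Set.range g ∧
    (∀ m : M0 k × M1 k × Minf k, g (f m) = 0) ∧
    {v : KFR k × k × k | g v = 0} = Set.range f ∧
    (∀ v : KFR k × k × k, f (g v) = 0) ∧
    {m : M0 k × M1 k × Minf k | f m = 0} = Set.range g := by
  have h2 : (2 : k) = 0 := CharTwo.two_eq_zero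
  have zE : (0 : KFR k) = EKF k 0 0 0 0 := by simp [EKF]
  have hεE : ∀ a b c d : k, ε (EKF k a b c d) = a := by
    intro a b c d
    rw [EKF_mk, hε]
    simp
  have s0 : ∀ m : M0 k, ∃ a c, m = mk0 k (EKF k a 0 c 0) := by
    intro m
    obtain ⟨r, rfl⟩ := Ideal.Quotient.mk_surjective m
    obtain ⟨a, b, c, d, rfl⟩ := EKF_surj k r
    exact ⟨a, c, (mk0_EKF k _ _ _ _ _ _ _ _).2 ⟨rfl, rfl⟩⟩
  have s1 : ∀ m : M1 k, ∃ a b, m = mk1 k (EKF k a b 0 0) := by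
    intro m
    obtain ⟨r, rfl⟩ := Ideal.Quotient.mk_surjective m
    obtain ⟨a, b, c, d, rfl⟩ := EKF_surj k r
    exact ⟨a, b, (mk1_EKF k _ _ _ _ _ _ _ _).2 ⟨rfl, rfl⟩⟩
  have sinf : ∀ m : Minf k, ∃ a b, m = mkinf k (EKF k a b 0 0) := by
    intro m
    obtain ⟨r, rfl⟩ := Ideal.Quotient.mk_surjective m
    obtain ⟨a, b, c, d, rfl⟩ := EKF_surj k r
    exact ⟨a, b + c, (mkinf_EKF k _ _ _ _ _ _ _ _).2 ⟨rfl, by ring⟩⟩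
  have hhE : ∀ p0 p1 q0 q1 r0 r1 : k,
      h (mk0 k (EKF k p0 0 p1 0), mk1 k (EKF k q0 q1 0 0), mkinf k (EKF k r0 r1 0 0)) =
        EKF k 0 (p0 + r0) (q0 + r0) (p1 + q1 + r1) := by
    intro p0 p1 q0 q1 r0 r1
    rw [hh]
    simp only [hμ0, hμ1, hμinf, x_EKF, y_EKF, xy_EKF, EKF_add, EKF_inj]
    refine ⟨?_, ?_, ?_, ?_⟩ <;> ring
  have hfE : ∀ p0 p1 q0 q1 r0 r1 : k,
      f (mk0 k (EKF k p0 0 p1 0), mk1 k (EKF k q0 q1 0 0), mkinf k (EKF k r0 r1 0 0)) =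
        (EKF k 0 (p0 + r0) (q0 + r0) (p1 + q1 + r1), p0 + r0, q0 + r0) := by
    intro p0 p1 q0 q1 r0 r1
    rw [hf, ← hhE, hh]
    simp only [hε0, hε1, hεinf, hεE]
  have hgE : ∀ a b c d u v : k, g (EKF k a b c d, u, v) =
      (mk0 k (EKF k a 0 (c + v) 0), mk1 k (EKF k a (b + u) 0 0),
        mkinf k (EKF k a (b + c + u + v) 0 0)) := by
    intro a b c d u v
    have e1 : ∀ t : k, algebraMap k (KFR k) t * yR k = EKF k 0 0 t 0 := by
      intro t; simp [EKF]
    have e2 : ∀ t : k, algebraMap k (KFR k) t * xR k = EKF k 0 t 0 0 := by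
      intro t; simp [EKF]
    have a0 : ∀ t : k, (algebraMap k (M0 k) : k →+* M0 k) t = mk0 k (algebraMap k (KFR k) t) := fun _ => rfl
    have a1 : ∀ t : k, (algebraMap k (M1 k) : k →+* M1 k) t = mk1 k (algebraMap k (KFR k) t) := fun _ => rfl
    have ai : ∀ t : k, (algebraMap k (Minf k) : k →+* Minf k) t = mkinf k (algebraMap k (KFR k) t) := fun _ => rfl
    rw [hg]
    simp only [a0, a1, ai, ← map_mul, ← map_add, e1, e2, EKF_add, Prod.mk.injEq, mk0_EKF,
      mk1_EKF, mkinf_EKF]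
    refine ⟨⟨?_, ?_⟩, ⟨?_, ?_⟩, ?_, ?_⟩ <;> first | trivial | ring
  have zM : (0 : M0 k × M1 k × Minf k) =
      (mk0 k (EKF k 0 0 0 0), mk1 k (EKF k 0 0 0 0), mkinf k (EKF k 0 0 0 0)) := by
    rw [← zE]; simp only [map_zero]; rfl
  have zR : (0 : KFR k × k × k) = (EKF k 0 0 0 0, 0, 0) := by
    rw [← zE]; rfl
  have hεh : ∀ m, ε (h m) = 0 := by
    rintro ⟨m0, m1, mi⟩
    obtain ⟨p0, p1, rfl⟩ := s0 m0
    obtain ⟨q0, q1, rfl⟩ := s1 m1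
    obtain ⟨r0, r1, rfl⟩ := sinf mi
    rw [hhE, hεE]
  have hfg : ∀ v, f (g v) = 0 := by
    rintro ⟨a, u, v⟩
    obtain ⟨a, b, c, d, rfl⟩ := EKF_surj k a
    rw [hgE, hfE, zR]
    simp only [Prod.mk.injEq, EKF_inj]
    have : a + a = 0 := by linear_combination a * h2
    exact ⟨⟨trivial, this, this, by linear_combination (b + c + u + v) * h2⟩, this, this⟩
  have hhf : ∀ m, h m = (f m).1 := by intro m; rw [hh, hf]
  have hhg : ∀ v, h (g v) = 0 := by intro v; rw [hhf, hfg]; rfl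
  have hgf : ∀ m, g (f m) = 0 := by
    rintro ⟨m0, m1, mi⟩
    obtain ⟨p0, p1, rfl⟩ := s0 m0
    obtain ⟨q0, q1, rfl⟩ := s1 m1
    obtain ⟨r0, r1, rfl⟩ := sinf mi
    rw [hfE, hgE, zM]
    simp only [Prod.mk.injEq, mk0_EKF, mk1_EKF, mkinf_EKF]
    refine ⟨⟨trivial, ?_⟩, ⟨trivial, ?_⟩, trivial, ?_⟩
    · linear_combination (q0 + r0) * h2
    · linear_combination (p0 + r0) * h2
    · linear_combination (p0 + q0 + 2 * r0) * h2
  have kerh : ∀ m, h m = 0 → m ∈ Set.range g := by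
    rintro ⟨m0, m1, mi⟩ hm
    obtain ⟨p0, p1, rfl⟩ := s0 m0
    obtain ⟨q0, q1, rfl⟩ := s1 m1
    obtain ⟨r0, r1, rfl⟩ := sinf mi
    rw [hhE, zE, EKF_inj] at hm
    obtain ⟨-, e1, e2, e3⟩ := hm
    refine ⟨(EKF k r0 q1 p1 0, 0, 0), ?_⟩
    rw [hgE]
    simp only [Prod.mk.injEq, mk0_EKF, mk1_EKF, mkinf_EKF]
    refine ⟨⟨?_, ?_⟩, ⟨?_, ?_⟩, ?_, ?_⟩
    · linear_combination r0 * h2 - e1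
    · ring
    · linear_combination r0 * h2 - e2
    · ring
    · trivial
    · linear_combination e3 - r1 * h2
  refine ⟨fun a => ⟨EKF k a 0 0 0, hεE _ _ _ _⟩, hεh, ?_, hhg, ?_, hgf, ?_, hfg, ?_⟩
  · ext r
    constructor
    · intro hr
      obtain ⟨a, b, c, d, rfl⟩ := EKF_surj k r
      have ha : a = 0 := by simpa [hεE] using hr
      subst ha
      exact ⟨(mk0 k (EKF k b 0 d 0), mk1 k (EKF k c 0 0 0), mkinf k (EKF k 0 0 0 0)), by
        rw [hhE]; simp⟩
    · rintro ⟨m, rfl⟩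
      exact hεh m
  · ext m
    constructor
    · exact kerh m
    · rintro ⟨v, rfl⟩
      exact hhg v
  · ext v
    constructor
    · intro hv
      obtain ⟨r, u, v⟩ := v
      obtain ⟨a, b, c, d, rfl⟩ := EKF_surj k r
      rw [Set.mem_ofPred_eq, hgE, zM] at hv
      simp only [Prod.mk.injEq, mk0_EKF, mk1_EKF, mkinf_EKF] at hv
      obtain ⟨⟨e1, e2⟩, ⟨-, e3⟩, -, -⟩ := hv
      refine ⟨(mk0 k (EKF k b 0 d 0), mk1 k (EKF k c 0 0 0), mkinf k (EKF k 0 0 0 0)), ?_⟩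
      rw [hfE]
      simp only [Prod.mk.injEq, EKF_inj]
      refine ⟨⟨e1.symm, by ring, by ring, by ring⟩, ?_, ?_⟩
      · linear_combination b * h2 - e3
      · linear_combination c * h2 - e2
    · rintro ⟨m, rfl⟩
      exact hgf m
  · ext m
    constructor
    · intro hm
      apply kerh
      rw [hhf, show f m = 0 from hm]; rfl
    · rintro ⟨v, rfl⟩
      exact hfg v


end
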